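/- Let d ≥ 1, let α = (α_1,…,α_d) with each α_i > −1 and β > −1, let u be the Appell moment functional ⟨u, f⟩ = ∫_{T_d} f(x) x_1^{α_1}⋯x_d^{α_d} (1−|x|)^β dx on the d-simplex, let λ ≥ 0, and define the Appell-type moment functional v = u + λ δ_0, ⟨v, f⟩ = ⟨u, f⟩ + λ f(0). Let Φ be the symmetric d×d polynomial matrix with entries φ_ii = x_i(x_i − 1) and φ_ij = x_i x_j for i ≠ j, and Ψ the d×1 polynomial vector with entries ψ_i = (|α| + β + d + 1) x_i − (α_i + 1). Then for every i ∈ {1,…,d}, v satisfies the matrix Pearson equation div((x_i Φ) v) = (Φe_i + x_i Ψ)^t v, i.e., ⟨v, x_i Φ ∇f + (Φe_i + x_i Ψ) f⟩ = 0 for every polynomial f, where Φe_i is the i-th column of Φ. Here deg(x_i Φ) = 3 and deg(Φe_i + x_i Ψ) = 2, so v satisfies a Pearson-type equation with s = max{3−2, 2−1} = 1. -/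

import Mathlib

open MvPolynomial Matrix Finset MeasureTheory

noncomputable section

/-- Real polynomials in `d` variables. -/
abbrev MPoly (d : ℕ) := MvPolynomial (Fin d) ℝ

/-- A moment functional: a linear functional on `MPoly d`. -/
abbrev MomF (d : ℕ) := MPoly d →ₗ[ℝ] ℝ

/-- `r_n = binom(n + d - 1, n)`, the dimension of the space of homogeneous
polynomials of degree `n` in `d` variables. -/
def rdim (d n : ℕ) : ℕ := (n + d - 1).choose n

/-- Entrywise application of a moment functional to a polynomial matrix. -/
def mApply {d : ℕ} (u : MomF d) {m n : Type*} (M : Matrix m n (MPoly d)) : Matrix m n ℝ :=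
  Matrix.of fun i j => u (M i j)

/-- The matrix Pearson equation `div(Φ u) = Ψᵗ u`, i.e. `⟨u, Φ ∇f + Ψ f⟩ = 0`
for every polynomial `f` (a system of `d` scalar equations). -/
def Pearson {d : ℕ} (u : MomF d) (Φ : Matrix (Fin d) (Fin d) (MPoly d))
    (Ψ : Fin d → MPoly d) : Prop :=
  ∀ f : MPoly d, ∀ i : Fin d, u (∑ j, Φ i j * pderiv j f + Ψ i * f) = 0

/-- Degree of a polynomial matrix: max of total degrees of the entries. -/
def matDeg {d : ℕ} {m n : Type*} [Fintype m] [Fintype n]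
    (M : Matrix m n (MPoly d)) : ℕ :=
  Finset.univ.sup fun p : m × n => (M p.1 p.2).totalDegree

/-- Degree of a polynomial (column) vector. -/
def vecDeg {d : ℕ} {m : Type*} [Fintype m] (v : m → MPoly d) : ℕ :=
  Finset.univ.sup fun i => (v i).totalDegree

/-- The Jacobian `∇ℙᵗ`: the `d × m` matrix with `(i,k)` entry `∂ᵢ P k`. -/
def gradT {d m : ℕ} (P : Fin m → MPoly d) : Matrix (Fin d) (Fin m) (MPoly d) :=
  Matrix.of fun i k => pderiv i (P k)

/-- The Kronecker product `I_d ⊗ ℙᵗ`: the block-diagonal `d × (d·m)` matrix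
whose `d` diagonal blocks equal the row vector `ℙᵗ`. -/
def kronIdRow {d m : ℕ} (P : Fin m → MPoly d) :
    Matrix (Fin d) (Fin d × Fin m) (MPoly d) :=
  Matrix.of fun i jk => if i = jk.1 then P jk.2 else 0

/-- A constant real matrix viewed as a polynomial matrix. -/
def cmap {d : ℕ} {m n : Type*} (F : Matrix m n ℝ) : Matrix m n (MPoly d) :=
  F.map MvPolynomial.C

/-- `{ℙ_n}` is a weak orthogonal polynomial system with respect to `u`:
each entry of `ℙ_n` has total degree `n`, the entries of `ℙ_0, …, ℙ_n` form a
basis of the polynomials of total degree at most `n` (spanning + linear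
independence), `⟨u, ℙ_n ℙ_mᵗ⟩ = 0` for `n ≠ m`, and `H_n = ⟨u, ℙ_n ℙ_nᵗ⟩` is
nonsingular. -/
structure IsWOPS {d : ℕ} (u : MomF d) (P : (n : ℕ) → Fin (rdim d n) → MPoly d) : Prop where
  deg : ∀ n k, (P n k).totalDegree = n
  span : ∀ n : ℕ, MvPolynomial.restrictTotalDegree (Fin d) ℝ n ≤
    Submodule.span ℝ {g | ∃ m ≤ n, ∃ k, P m k = g}
  indep : LinearIndependent ℝ (fun p : (n : ℕ) × Fin (rdim d n) => P p.1 p.2)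
  orth : ∀ m n, m ≠ n → ∀ j k, u (P m j * P n k) = 0
  Hdet : ∀ n, (Matrix.of fun j k : Fin (rdim d n) => u (P n j * P n k)).det ≠ 0

/-- The matrix `H_n = ⟨u, ℙ_n ℙ_nᵗ⟩`. -/
def Hmat {d : ℕ} (u : MomF d) (P : (n : ℕ) → Fin (rdim d n) → MPoly d) (n : ℕ) :
    Matrix (Fin (rdim d n)) (Fin (rdim d n)) ℝ :=
  Matrix.of fun j k => u (P n j * P n k)

/-- The second-order differential operator
`L[f] = Σ_{i,j} φ_ij ∂²f/∂xᵢ∂xⱼ + Σ_i ψ_i ∂f/∂xᵢ` associated with `Φ`, `Ψ`. -/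
def Lop {d : ℕ} (Φ : Matrix (Fin d) (Fin d) (MPoly d)) (Ψ : Fin d → MPoly d)
    (f : MPoly d) : MPoly d :=
  (∑ i, ∑ j, Φ i j * pderiv i (pderiv j f)) + ∑ i, Ψ i * pderiv i f

/-- The `d`-simplex `T_d = {x : xᵢ ≥ 0, 1 − |x| ≥ 0}`. -/
def simplexSet (d : ℕ) : Set (Fin d → ℝ) :=
  {x | (∀ i, 0 ≤ x i) ∧ ∑ i, x i ≤ 1}

/-- The Appell weight `x^α (1 − |x|)^β` (real powers). -/
def appellWeight {d : ℕ} (α : Fin d → ℝ) (β : ℝ) (x : Fin d → ℝ) : ℝ :=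
  (∏ i, x i ^ α i) * (1 - ∑ i, x i) ^ β

/-- The Appell moment functional `⟨u, f⟩ = ∫_{T_d} f(x) x^α (1 − |x|)^β dx`. -/
def appellInt {d : ℕ} (α : Fin d → ℝ) (β : ℝ) (f : MPoly d) : ℝ :=
  ∫ x in simplexSet d, MvPolynomial.eval x f * appellWeight α β x

/-!
Multiplied by a monomial, the Appell weight is again an Appell weight, so the moments of `u`
are Dirichlet integrals, that is, quotients of values of `Γ`. Since `x_j ∂_j x^n = n_j x^n`, the
Pearson equation of `u` tested on `x^n` relates only the moments of `x_a x^n` and `x^n`, and it is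
the functional equation of `Γ`. Replacing `f` by `x_i f` turns the data `(Φ, Ψ)` into
`(x_i Φ, Φe_i + x_i Ψ)`. Both of these vanish at the origin, so `δ_0` satisfies the new equation too
and may be added to `u` with any mass.
-/

open scoped ENNReal

section DirichletBeta

variable {ι : Type*} [Fintype ι]

/-- The multivariate beta function `Γ(a_1) ⋯ Γ(a_d) Γ(b) / Γ(a_1 + ⋯ + a_d + b)`, the value of a
Dirichlet integral. The last parameter is kept apart because it belongs to the face `|x| = 1` of
the simplex. -/
def dirichletBeta (a : ι → ℝ) (b : ℝ) : ℝ :=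
  (∏ i, Real.Gamma (a i)) * Real.Gamma b / Real.Gamma (∑ i, a i + b)

lemma dirichletBeta_nonneg {a : ι → ℝ} {b : ℝ} (ha : ∀ i, 0 ≤ a i) (hb : 0 ≤ b) :
    0 ≤ dirichletBeta a b :=
  div_nonneg
    (mul_nonneg (prod_nonneg fun i _ => Real.Gamma_nonneg_of_nonneg (ha i))
      (Real.Gamma_nonneg_of_nonneg hb))
    (Real.Gamma_nonneg_of_nonneg (add_nonneg (sum_nonneg fun i _ => ha i) hb))

lemma sum_add_mul_dirichletBeta_add_single [DecidableEq ι] {a : ι → ℝ} {b : ℝ} {j : ι}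
    (haj : a j ≠ 0) (hab : ∑ i, a i + b ≠ 0) :
    (∑ i, a i + b) * dirichletBeta (a + Pi.single j 1) b = a j * dirichletBeta a b := by
  have hsum : ∑ i, (a + Pi.single j 1 : ι → ℝ) i + b = ∑ i, a i + b + 1 := by
    simp only [Pi.add_apply, sum_add_distrib, sum_pi_single', mem_univ, if_true]
    ring
  have hprod : ∏ i, Real.Gamma ((a + Pi.single j 1 : ι → ℝ) i) =
      a j * ∏ i, Real.Gamma (a i) := by
    have hne : ∀ i ∈ univ.erase j,
        Real.Gamma ((a + Pi.single j 1 : ι → ℝ) i) = Real.Gamma (a i) := fun i hi => by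
      simp [Pi.single_eq_of_ne (ne_of_mem_erase hi)]
    rw [← mul_prod_erase _ _ (mem_univ j), prod_congr rfl hne, Pi.add_apply, Pi.single_eq_same,
      Real.Gamma_add_one haj, mul_assoc, mul_prod_erase _ (fun i => Real.Gamma (a i)) (mem_univ j)]
  rw [dirichletBeta, dirichletBeta, hsum, hprod, Real.Gamma_add_one hab]
  field_simp

lemma dirichletBeta_fin_succ {n : ℕ} {a : Fin (n + 1) → ℝ} {b : ℝ} (hab : 0 < a 0 + b) :
    dirichletBeta a b = ProbabilityTheory.beta (a 0) b * dirichletBeta (Fin.tail a) (a 0 + b) := by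
  have hΓ : Real.Gamma (a 0 + b) ≠ 0 := (Real.Gamma_pos_of_pos hab).ne'
  have hsum : a 0 + ∑ i : Fin n, a i.succ + b = ∑ i : Fin n, a i.succ + (a 0 + b) := by ring
  simp only [dirichletBeta, ProbabilityTheory.beta, Fin.prod_univ_succ, Fin.sum_univ_succ, Fin.tail,
    hsum]
  field_simp

end DirichletBeta

section BetaIntegral

variable {a b : ℝ}

lemma lintegral_Ioo_rpow_mul_one_sub_rpow (ha : -1 < a) (hb : -1 < b) :
    ∫⁻ t in Set.Ioo (0 : ℝ) 1, ENNReal.ofReal (t ^ a * (1 - t) ^ b) =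
      ENNReal.ofReal (ProbabilityTheory.beta (a + 1) (b + 1)) := by
  have hB : 0 < ProbabilityTheory.beta (a + 1) (b + 1) :=
    ProbabilityTheory.beta_pos (by linarith) (by linarith)
  have hpdf := ProbabilityTheory.lintegral_betaPDF_eq_one (α := a + 1) (β := b + 1)
    (by linarith) (by linarith)
  simp_rw [ProbabilityTheory.lintegral_betaPDF, add_sub_cancel_right, mul_assoc,
    ENNReal.ofReal_mul (one_div_nonneg.2 hB.le)] at hpdf
  rw [lintegral_const_mul _ (by fun_prop)] at hpdf
  rw [ENNReal.eq_inv_of_mul_eq_one_left ((mul_comm _ _).trans hpdf),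
    ← ENNReal.ofReal_inv_of_pos (one_div_pos.2 hB), one_div, inv_inv]

lemma lintegral_Ioo_rpow_mul_sub_rpow {s : ℝ} (ha : -1 < a) (hb : -1 < b) (hs : 0 < s) :
    ∫⁻ t in Set.Ioo 0 s, ENNReal.ofReal (t ^ a * (s - t) ^ b) =
      ENNReal.ofReal (ProbabilityTheory.beta (a + 1) (b + 1) * s ^ (a + b + 1)) := by
  have himage : (fun t => s * t) '' Set.Ioo 0 1 = Set.Ioo 0 s := by
    rw [Set.image_mul_left_Ioo hs, mul_zero, mul_one]
  have hscale : ∀ t ∈ Set.Ioo (0 : ℝ) 1,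
      ENNReal.ofReal |s| * ENNReal.ofReal ((s * t) ^ a * (s - s * t) ^ b) =
        ENNReal.ofReal (s ^ (a + b + 1)) * ENNReal.ofReal (t ^ a * (1 - t) ^ b) := by
    intro t ht
    rw [← ENNReal.ofReal_mul (abs_nonneg _), ← ENNReal.ofReal_mul (by positivity), abs_of_pos hs,
      ← mul_one_sub, Real.mul_rpow hs.le ht.1.le, Real.mul_rpow hs.le (by linarith [ht.2]),
      Real.rpow_add hs, Real.rpow_add hs, Real.rpow_one]
    congr 1
    ring
  rw [← himage, lintegral_image_eq_lintegral_abs_deriv_mul measurableSet_Ioo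
      (fun t _ => (hasDerivAt_const_mul s).hasDerivWithinAt) (mul_right_injective₀ hs.ne').injOn,
    setLIntegral_congr_fun measurableSet_Ioo hscale, lintegral_const_mul _ (by fun_prop),
    lintegral_Ioo_rpow_mul_one_sub_rpow ha hb, ← ENNReal.ofReal_mul (by positivity), mul_comm]

end BetaIntegral

lemma lintegral_pi_fin_succ {n : ℕ} {E : Fin (n + 1) → Type*} [∀ i, MeasurableSpace (E i)]
    (μ : ∀ i, Measure (E i)) [∀ i, SigmaFinite (μ i)] {f : (∀ i, E i) → ℝ≥0∞} (hf : Measurable f) :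
    ∫⁻ x, f x ∂Measure.pi μ =
      ∫⁻ y, ∫⁻ t, f (Fin.cons t y) ∂μ 0 ∂Measure.pi fun i => μ i.succ := by
  have hf_split : Measurable fun z => f ((MeasurableEquiv.piFinSuccAbove E 0).symm z) :=
    hf.comp (MeasurableEquiv.measurable _)
  rw [← (measurePreserving_piFinSuccAbove μ 0).symm.lintegral_comp hf,
    lintegral_prod_symm' _ hf_split]
  exact lintegral_congr fun y => lintegral_congr fun t => congrArg f (Fin.insertNth_zero t y)

lemma ae_linearMap_ne {E : Type*} [NormedAddCommGroup E] [NormedSpace ℝ E] [MeasurableSpace E]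
    [BorelSpace E] [FiniteDimensional ℝ E] (μ : Measure E) [μ.IsAddHaarMeasure] (φ : E →ₗ[ℝ] ℝ)
    {c : ℝ} (hφ : ∃ x, φ x ≠ c) : ∀ᵐ x ∂μ, φ x ≠ c := by
  let levelSet : AffineSubspace ℝ E := (affineSpan ℝ {c}).comap φ.toAffineMap
  have mem_levelSet : ∀ x, x ∈ levelSet ↔ φ x = c := fun x => by simp [levelSet]
  have levelSet_ne_top : levelSet ≠ ⊤ := fun htop =>
    hφ.elim fun x hx => hx ((mem_levelSet x).1 (htop ▸ AffineSubspace.mem_top ℝ E x))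
  filter_upwards [measure_eq_zero_iff_ae_notMem.1
    (Measure.addHaar_affineSubspace μ levelSet levelSet_ne_top)] with x hx
  exact fun h => hx ((mem_levelSet x).2 h)

section OpenSimplex

/-- The interior of the simplex `T_d`. On it the real powers in the Appell weight obey
`x^(r + n) = x^r * x^n`, which fails for the junk value of `0 ^ r`. -/
def openSimplex (d : ℕ) : Set (Fin d → ℝ) :=
  {x | (∀ i, 0 < x i) ∧ ∑ i, x i < 1}

lemma openSimplex_subset_simplexSet (d : ℕ) : openSimplex d ⊆ simplexSet d :=
  fun _ hx => ⟨fun i => (hx.1 i).le, hx.2.le⟩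

lemma measurableSet_openSimplex (d : ℕ) : MeasurableSet (openSimplex d) := by
  unfold openSimplex
  measurability

lemma simplexSet_ae_eq_openSimplex (d : ℕ) : simplexSet d =ᵐ[volume] openSimplex d := by
  have coord_ne_zero : ∀ᵐ x : Fin d → ℝ, ∀ i, x i ≠ 0 :=
    ae_all_iff.2 fun i => ae_linearMap_ne (volume : Measure (Fin d → ℝ)) (LinearMap.proj i)
      ⟨1, one_ne_zero⟩
  have sum_ne_one : ∀ᵐ x : Fin d → ℝ, ∑ i, x i ≠ 1 := by
    simpa using ae_linearMap_ne (volume : Measure (Fin d → ℝ)) (c := 1)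
      (∑ i, LinearMap.proj i) ⟨0, by simp⟩
  filter_upwards [coord_ne_zero, sum_ne_one] with x hx hsum
  exact propext ⟨fun h => ⟨fun i => (h.1 i).lt_of_ne' (hx i), h.2.lt_of_ne hsum⟩,
    fun h => openSimplex_subset_simplexSet d h⟩

lemma cons_mem_openSimplex {n : ℕ} {t : ℝ} {y : Fin n → ℝ} :
    (Fin.cons t y : Fin (n + 1) → ℝ) ∈ openSimplex (n + 1) ↔
      y ∈ openSimplex n ∧ t ∈ Set.Ioo 0 (1 - ∑ i, y i) := by
  simp only [openSimplex, Set.mem_ofPred_eq, Fin.forall_fin_succ, Fin.sum_univ_succ, Fin.cons_zero,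
    Fin.cons_succ, Set.mem_Ioo, lt_sub_iff_add_lt]
  constructor
  · rintro ⟨⟨ht, hy⟩, hsum⟩
    exact ⟨⟨hy, by linarith⟩, ht, hsum⟩
  · rintro ⟨⟨hy, -⟩, ht, hsum⟩
    exact ⟨⟨ht, hy⟩, hsum⟩

lemma setLIntegral_openSimplex_succ {n : ℕ} {f : (Fin (n + 1) → ℝ) → ℝ≥0∞} (hf : Measurable f) :
    ∫⁻ x in openSimplex (n + 1), f x =
      ∫⁻ y in openSimplex n, ∫⁻ t in Set.Ioo 0 (1 - ∑ i, y i), f (Fin.cons t y) := by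
  have indicator_cons : ∀ (y : Fin n → ℝ) (t : ℝ),
      (openSimplex (n + 1)).indicator f (Fin.cons t y) =
        (openSimplex n).indicator (fun y => (Set.Ioo 0 (1 - ∑ i, y i)).indicator
          (fun t => f (Fin.cons t y)) t) y := fun y t => by
    classical simp only [Set.indicator_apply, cons_mem_openSimplex, ite_and]
  rw [← lintegral_indicator (measurableSet_openSimplex _), volume_pi,
    lintegral_pi_fin_succ _ (hf.indicator (measurableSet_openSimplex _)),
    ← lintegral_indicator (measurableSet_openSimplex _), volume_pi]
  refine lintegral_congr fun y => ?_
  by_cases hy : y ∈ openSimplex n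
  · simp only [indicator_cons, Set.indicator_of_mem hy, lintegral_indicator measurableSet_Ioo]
  · simp only [indicator_cons, Set.indicator_of_notMem hy, lintegral_zero]

end OpenSimplex

section AppellWeight

variable {d : ℕ} {α : Fin d → ℝ} {β : ℝ}

@[fun_prop]
lemma measurable_appellWeight (α : Fin d → ℝ) (β : ℝ) : Measurable (appellWeight α β) := by
  unfold appellWeight
  fun_prop

lemma appellWeight_nonneg {x : Fin d → ℝ} (hx : x ∈ simplexSet d) : 0 ≤ appellWeight α β x :=
  mul_nonneg (prod_nonneg fun i _ => Real.rpow_nonneg (hx.1 i) _)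
    (Real.rpow_nonneg (sub_nonneg.2 hx.2) _)

lemma appellWeight_cons {n : ℕ} (α : Fin (n + 1) → ℝ) (β t : ℝ) (y : Fin n → ℝ) :
    appellWeight α β (Fin.cons t y) =
      (∏ i, y i ^ Fin.tail α i) * (t ^ α 0 * (1 - ∑ i, y i - t) ^ β) := by
  simp only [appellWeight, Fin.prod_univ_succ, Fin.sum_univ_succ, Fin.cons_zero, Fin.cons_succ,
    Fin.tail, sub_add_eq_sub_sub_swap]
  ring

lemma eval_monomial_mul_appellWeight (n : Fin d →₀ ℕ) (c : ℝ) {x : Fin d → ℝ}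
    (hx : x ∈ openSimplex d) :
    eval x (monomial n c) * appellWeight α β x = c * appellWeight (fun i => α i + n i) β x := by
  have hprod : ∏ i, x i ^ (α i + n i) = (∏ i, x i ^ α i) * ∏ i, x i ^ n i := by
    rw [← prod_mul_distrib]
    exact prod_congr rfl fun i _ => Real.rpow_add_natCast (hx.1 i).ne' _ _
  rw [eval_monomial, Finsupp.prod_fintype _ _ fun i => pow_zero _, appellWeight, appellWeight,
    hprod]
  ring

lemma lintegral_appellWeight_cons {n : ℕ} {α : Fin (n + 1) → ℝ} (hα : -1 < α 0) (hβ : -1 < β)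
    {y : Fin n → ℝ} (hy : y ∈ openSimplex n) :
    ∫⁻ t in Set.Ioo 0 (1 - ∑ i, y i), ENNReal.ofReal (appellWeight α β (Fin.cons t y)) =
      ENNReal.ofReal (ProbabilityTheory.beta (α 0 + 1) (β + 1)) *
        ENNReal.ofReal (appellWeight (Fin.tail α) (α 0 + β + 1) y) := by
  have hprod : 0 ≤ ∏ i, y i ^ Fin.tail α i :=
    prod_nonneg fun i _ => Real.rpow_nonneg (hy.1 i).le _
  have hbeta : 0 ≤ ProbabilityTheory.beta (α 0 + 1) (β + 1) :=
    (ProbabilityTheory.beta_pos (by linarith) (by linarith)).le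
  simp_rw [appellWeight_cons, ENNReal.ofReal_mul hprod]
  rw [lintegral_const_mul _ (by fun_prop),
    lintegral_Ioo_rpow_mul_sub_rpow hα hβ (sub_pos.2 hy.2), ← ENNReal.ofReal_mul hprod,
    ← ENNReal.ofReal_mul hbeta, appellWeight, mul_left_comm]

theorem lintegral_openSimplex_appellWeight (hα : ∀ i, -1 < α i) (hβ : -1 < β) :
    ∫⁻ x in openSimplex d, ENNReal.ofReal (appellWeight α β x) =
      ENNReal.ofReal (dirichletBeta (fun i => α i + 1) (β + 1)) := by
  induction d generalizing β with
  | zero =>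
    have hΓ : Real.Gamma (β + 1) ≠ 0 := (Real.Gamma_pos_of_pos (by linarith)).ne'
    simp [openSimplex, appellWeight, dirichletBeta, hΓ, lintegral_unique, volume_pi]
  | succ n ih =>
    have hbeta : 0 ≤ ProbabilityTheory.beta (α 0 + 1) (β + 1) :=
      (ProbabilityTheory.beta_pos (by linarith [hα 0]) (by linarith)).le
    rw [setLIntegral_openSimplex_succ (by fun_prop),
      setLIntegral_congr_fun (measurableSet_openSimplex n)
        (fun y hy => lintegral_appellWeight_cons (hα 0) hβ hy),
      lintegral_const_mul _ (by fun_prop),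
      ih (α := Fin.tail α) (fun i => hα i.succ) (by linarith [hα 0]),
      ← ENNReal.ofReal_mul hbeta, dirichletBeta_fin_succ (by linarith [hα 0]),
      add_add_add_comm, ← add_assoc (α 0 + β)]
    rfl

lemma integrableOn_appellWeight (hα : ∀ i, -1 < α i) (hβ : -1 < β) :
    IntegrableOn (appellWeight α β) (openSimplex d) := by
  refine ⟨by fun_prop, ?_⟩
  rw [hasFiniteIntegral_iff_ofReal (ae_restrict_of_forall_mem (measurableSet_openSimplex d)
    fun x hx => appellWeight_nonneg (openSimplex_subset_simplexSet d hx)),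
    lintegral_openSimplex_appellWeight hα hβ]
  exact ENNReal.ofReal_lt_top

lemma integral_openSimplex_appellWeight (hα : ∀ i, -1 < α i) (hβ : -1 < β) :
    ∫ x in openSimplex d, appellWeight α β x = dirichletBeta (fun i => α i + 1) (β + 1) := by
  rw [integral_eq_lintegral_of_nonneg_ae
      (ae_restrict_of_forall_mem (measurableSet_openSimplex d)
        fun x hx => appellWeight_nonneg (openSimplex_subset_simplexSet d hx)) (by fun_prop),
    lintegral_openSimplex_appellWeight hα hβ, ENNReal.toReal_ofReal
      (dirichletBeta_nonneg (fun i => by linarith [hα i]) (by linarith))]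

lemma integrableOn_eval_mul_appellWeight (hα : ∀ i, -1 < α i) (hβ : -1 < β) (f : MPoly d) :
    IntegrableOn (fun x => eval x f * appellWeight α β x) (simplexSet d) := by
  rw [integrableOn_congr_set_ae (simplexSet_ae_eq_openSimplex d)]
  induction f using MvPolynomial.induction_on' with
  | monomial n c =>
    rw [integrableOn_congr_fun (fun x hx => eval_monomial_mul_appellWeight n c hx)
      (measurableSet_openSimplex d)]
    exact (integrableOn_appellWeight
      (fun i => (hα i).trans_le (le_add_of_nonneg_right (n i).cast_nonneg)) hβ).const_mul c
  | add p q hp hq =>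
    simp only [map_add, add_mul]
    exact hp.add hq

lemma appellInt_monomial (hα : ∀ i, -1 < α i) (hβ : -1 < β) (n : Fin d →₀ ℕ) (c : ℝ) :
    appellInt α β (monomial n c) = c * dirichletBeta (fun i => α i + n i + 1) (β + 1) := by
  rw [appellInt, setIntegral_congr_set (simplexSet_ae_eq_openSimplex d),
    setIntegral_congr_fun (measurableSet_openSimplex d)
      (fun x hx => eval_monomial_mul_appellWeight n c hx), integral_const_mul,
    integral_openSimplex_appellWeight
      (fun i => (hα i).trans_le (le_add_of_nonneg_right (n i).cast_nonneg)) hβ]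

end AppellWeight

namespace Pearson

variable {d : ℕ} {u v : MomF d} {Φ : Matrix (Fin d) (Fin d) (MPoly d)} {Ψ : Fin d → MPoly d}

lemma of_monomial
    (h : ∀ n i, u (∑ j, Φ i j * pderiv j (monomial n 1) + Ψ i * monomial n 1) = 0) :
    Pearson u Φ Ψ := by
  intro f i
  induction f using MvPolynomial.induction_on' with
  | monomial n c =>
    have hc : monomial n c = c • (monomial n 1 : MPoly d) := by simp [smul_monomial]
    simp only [hc, Derivation.map_smul, LinearMap.map_smul, mul_smul_comm, ← smul_sum, ← smul_add,
      h, smul_zero]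
  | add p q hp hq =>
    simp only [map_add, mul_add, sum_add_distrib] at hp hq ⊢
    linarith

lemma add (hu : Pearson u Φ Ψ) (hv : Pearson v Φ Ψ) : Pearson (u + v) Φ Ψ := fun f i => by
  rw [LinearMap.add_apply, hu f i, hv f i, add_zero]

lemma smul (c : ℝ) (hu : Pearson u Φ Ψ) : Pearson (c • u) Φ Ψ := fun f i => by
  rw [LinearMap.smul_apply, hu f i, smul_zero]

lemma mul (hu : Pearson u Φ Ψ) (p : MPoly d) :
    Pearson u (p • Φ) ((Φ *ᵥ fun j => pderiv j p) + p • Ψ) := by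
  intro f i
  rw [← hu (p * f) i]
  congr 1
  simp only [Matrix.smul_apply, Pi.add_apply, Pi.smul_apply, smul_eq_mul, mulVec, dotProduct,
    Derivation.leibniz, mul_add, sum_add_distrib, add_mul, sum_mul]
  rw [← add_assoc]
  congr 1
  · congr 1 <;> exact sum_congr rfl fun j _ => by ring
  · ring

lemma mul_X (hu : Pearson u Φ Ψ) (k : Fin d) :
    Pearson u ((X k : MPoly d) • Φ) (Φ.col k + (X k : MPoly d) • Ψ) := by
  have gradient_X : (fun j => pderiv j (X k : MPoly d)) = Pi.single k 1 := by
    ext1 j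
    rw [pderiv_X, Pi.single_comm]
  simpa only [gradient_X, mulVec_single_one] using hu.mul (X k)

end Pearson

/-- The point evaluation `δ_p` at `p ∈ ℝ^d` as a moment functional. -/
def diracFunctional {d : ℕ} (p : Fin d → ℝ) : MomF d where
  toFun := eval p
  map_add' := map_add (eval p)
  map_smul' c f := smul_eval p f c

lemma pearson_diracFunctional {d : ℕ} {p : Fin d → ℝ} {Φ : Matrix (Fin d) (Fin d) (MPoly d)}
    {Ψ : Fin d → MPoly d} (hΦ : ∀ i j, eval p (Φ i j) = 0) (hΨ : ∀ i, eval p (Ψ i) = 0) :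
    Pearson (diracFunctional p) Φ Ψ := fun f i => by
  simp [diracFunctional, hΦ, hΨ]

section AppellData

/-- The matrix `Φ` in the Pearson equation `div(Φ u) = Ψᵗ u` of the Appell functional `u`.
It depends only on the dimension. -/
def appellPhi (d : ℕ) : Matrix (Fin d) (Fin d) (MPoly d) :=
  Matrix.of fun i j => if i = j then X i * (X i - 1) else X i * X j

/-- The vector `Ψ` in the Pearson equation `div(Φ u) = Ψᵗ u` of the Appell functional `u` with
exponents `α` and `β`. -/
def appellPsi {d : ℕ} (α : Fin d → ℝ) (β : ℝ) : Fin d → MPoly d :=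
  fun i => C ((∑ k, α k) + β + d + 1) * X i - C (α i + 1)

/-- The Appell moment functional `u`, bundled with its linearity; the conditions on the exponents
make every moment converge. -/
def appellFunctional {d : ℕ} {α : Fin d → ℝ} {β : ℝ} (hα : ∀ i, -1 < α i) (hβ : -1 < β) :
    MomF d where
  toFun := appellInt α β
  map_add' f g := by
    simp only [appellInt, map_add, add_mul]
    exact integral_add (integrableOn_eval_mul_appellWeight hα hβ f)
      (integrableOn_eval_mul_appellWeight hα hβ g)
  map_smul' c f := by
    simp only [appellInt, smul_eval, mul_assoc, integral_const_mul, RingHom.id_apply, smul_eq_mul]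

variable {d : ℕ} {α : Fin d → ℝ} {β : ℝ}

lemma appellPhi_apply (i j : Fin d) :
    appellPhi d i j = X i * (X j - C (if i = j then 1 else 0)) := by
  by_cases h : i = j
  · simp [appellPhi, h]
  · simp [appellPhi, h]

lemma sum_appellPhi_mul_pderiv_monomial (n : Fin d →₀ ℕ) (a : Fin d) :
    ∑ j, appellPhi d a j * pderiv j (monomial n 1) =
      C (∑ j, (n j : ℝ)) * (X a * monomial n 1) - C (n a : ℝ) * monomial n 1 := by
  have euler : ∀ j, X j * pderiv j (monomial n (1 : ℝ)) = C (n j : ℝ) * monomial n 1 := fun j => by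
    rw [X_mul_pderiv_monomial, nsmul_eq_mul, map_natCast]
  have hterm : ∀ j, appellPhi d a j * pderiv j (monomial n 1) =
      X a * (C (n j : ℝ) * monomial n 1) - if a = j then C (n j : ℝ) * monomial n 1 else 0 := by
    intro j
    rw [appellPhi_apply, ← euler]
    split_ifs with h
    · subst h
      simp only [map_one]
      ring
    · simp only [map_zero]
      ring
  simp only [hterm, sum_sub_distrib, sum_ite_eq, mem_univ, if_true, ← mul_sum, ← sum_mul, map_sum]
  ring

lemma appellInt_X_mul_monomial (hα : ∀ i, -1 < α i) (hβ : -1 < β) (n : Fin d →₀ ℕ) (a : Fin d) :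
    ((∑ i, α i) + β + d + 1 + ∑ i, (n i : ℝ)) * appellInt α β (X a * monomial n 1) =
      (α a + 1 + n a) * appellInt α β (monomial n 1) := by
  have hpos : ∀ i, 0 < α i + n i + 1 := fun i => by
    linarith [hα i, (n i).cast_nonneg (α := ℝ)]
  have hsum : (∑ i, α i) + β + d + 1 + ∑ i, (n i : ℝ) = ∑ i, (α i + n i + 1) + (β + 1) := by
    simp only [sum_add_distrib, sum_const, card_univ, Fintype.card_fin, nsmul_eq_mul, mul_one]
    ring
  have hsum_ne : ∑ i, (α i + n i + 1) + (β + 1) ≠ 0 :=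
    (add_pos_of_nonneg_of_pos (sum_nonneg fun i _ => (hpos i).le) (by linarith)).ne'
  have hexp : (fun i => α i + ((Finsupp.single a 1 + n : Fin d →₀ ℕ) i : ℝ) + 1) =
      (fun i => α i + n i + 1) + Pi.single a 1 := by
    ext i
    simp only [Finsupp.add_apply, Finsupp.single_eq_pi_single, Pi.add_apply, Nat.cast_add,
      Pi.single_apply, Nat.cast_ite, Nat.cast_one, Nat.cast_zero]
    ring
  rw [X, monomial_mul, one_mul, appellInt_monomial hα hβ, appellInt_monomial hα hβ, hexp, hsum,
    one_mul, one_mul, sum_add_mul_dirichletBeta_add_single (a := fun i => α i + n i + 1)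
      (hpos a).ne' hsum_ne, add_right_comm]

theorem pearson_appellFunctional (hα : ∀ i, -1 < α i) (hβ : -1 < β) :
    Pearson (appellFunctional hα hβ) (appellPhi d) (appellPsi α β) := by
  refine .of_monomial fun n a => ?_
  have hpoly : ∑ j, appellPhi d a j * pderiv j (monomial n 1) + appellPsi α β a * monomial n 1 =
      ((∑ i, α i) + β + d + 1 + ∑ i, (n i : ℝ)) • (X a * monomial n 1) -
        (α a + 1 + n a) • monomial n 1 := by
    rw [sum_appellPhi_mul_pderiv_monomial, appellPsi, smul_eq_C_mul, smul_eq_C_mul]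
    simp only [map_add]
    ring
  rw [hpoly, map_sub, map_smul, map_smul]
  exact sub_eq_zero.2 (appellInt_X_mul_monomial hα hβ n a)

end AppellData

section Degree

lemma totalDegree_C_mul_X_sub_C {σ R : Type*} [CommRing R] {c : R} (hc : c ≠ 0) (r : R) (i : σ) :
    (C c * X i - C r : MvPolynomial σ R).totalDegree = 1 := by
  have hlead : (C c * X i : MvPolynomial σ R).totalDegree = 1 := by
    rw [C_mul_X_eq_monomial, totalDegree_monomial _ hc, Finsupp.sum_single_index rfl]
  rw [sub_eq_add_neg, ← C_neg, totalDegree_add_eq_left_of_totalDegree_lt] <;>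
    simp [hlead]

lemma totalDegree_X_mul {σ R : Type*} [CommRing R] [IsDomain R] (i : σ) {p : MvPolynomial σ R}
    (hp : p ≠ 0) : (X i * p).totalDegree = p.totalDegree + 1 := by
  rw [totalDegree_mul_of_isDomain (X_ne_zero i) hp, totalDegree_X, add_comm]

lemma totalDegree_X_mul_C_mul_X_sub_C {σ R : Type*} [CommRing R] [IsDomain R] {c : R} (hc : c ≠ 0)
    (r : R) (i j : σ) : (X i * (C c * X j - C r) : MvPolynomial σ R).totalDegree = 2 := by
  have hdeg := totalDegree_C_mul_X_sub_C hc r j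
  have hne : (C c * X j - C r : MvPolynomial σ R) ≠ 0 := fun h => by simp [h] at hdeg
  rw [totalDegree_X_mul i hne, hdeg]

lemma matDeg_eq_of_forall_totalDegree_eq {d k : ℕ} {m n : Type*} [Fintype m] [Fintype n]
    [Nonempty m] [Nonempty n] {M : Matrix m n (MPoly d)} (hM : ∀ i j, (M i j).totalDegree = k) :
    matDeg M = k := by
  simp only [matDeg, hM, sup_const univ_nonempty]

lemma vecDeg_eq_of_forall_totalDegree_eq {d k : ℕ} {m : Type*} [Fintype m] [Nonempty m]
    {w : m → MPoly d} (hw : ∀ i, (w i).totalDegree = k) : vecDeg w = k := by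
  simp only [vecDeg, hw, sup_const univ_nonempty]

end Degree

section AppellDegree

variable {d : ℕ} {α : Fin d → ℝ} {β : ℝ}

lemma totalDegree_appellPhi (i j : Fin d) : (appellPhi d i j).totalDegree = 2 := by
  simpa only [appellPhi_apply, map_one, one_mul] using
    totalDegree_X_mul_C_mul_X_sub_C (one_ne_zero (α := ℝ)) (if i = j then 1 else 0) i j

lemma matDeg_X_smul_appellPhi (i : Fin d) : matDeg ((X i : MPoly d) • appellPhi d) = 3 := by
  have : Nonempty (Fin d) := ⟨i⟩
  refine matDeg_eq_of_forall_totalDegree_eq fun a b => ?_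
  have hdeg := totalDegree_appellPhi a b
  have hne : appellPhi d a b ≠ 0 := fun h => by simp [h] at hdeg
  rw [Matrix.smul_apply, smul_eq_mul, totalDegree_X_mul i hne, hdeg]

lemma vecDeg_appellPhi_col_add (hα : ∀ i, -1 < α i) (hβ : -1 < β) (i : Fin d) :
    vecDeg ((appellPhi d).col i + (X i : MPoly d) • appellPsi α β) = 2 := by
  have : Nonempty (Fin d) := ⟨i⟩
  have hsum : -(d : ℝ) ≤ ∑ k, α k := by
    simpa using sum_le_sum (s := univ) fun k _ => (hα k).le
  have hlead : (∑ k, α k) + β + d + 2 ≠ 0 := by linarith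
  refine vecDeg_eq_of_forall_totalDegree_eq fun a => ?_
  have hentry : ((appellPhi d).col i + (X i : MPoly d) • appellPsi α β) a =
      X i * (C ((∑ k, α k) + β + d + 2) * X a - C (α a + 1 + if i = a then 1 else 0)) := by
    have htwo : (∑ k, α k) + β + d + 2 = (∑ k, α k) + β + d + 1 + 1 := by ring
    change appellPhi d a i + X i * appellPsi α β a = _
    rw [appellPhi_apply, appellPsi, htwo]
    by_cases h : i = a
    · subst h
      simp only [if_true, map_add, map_one]
      ring
    · simp only [h, Ne.symm h, if_false, map_add, map_one, map_zero]
      ring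
  rw [hentry, totalDegree_X_mul_C_mul_X_sub_C hlead]

end AppellDegree

theorem appell_type_is_semiclassical_general {d : ℕ} {α : Fin d → ℝ} (hα : ∀ i, -1 < α i) {β : ℝ}
    (hβ : -1 < β) (lam : ℝ) (i : Fin d) :
    Pearson (appellFunctional hα hβ + lam • diracFunctional 0) ((X i : MPoly d) • appellPhi d)
        ((appellPhi d).col i + (X i : MPoly d) • appellPsi α β) ∧
      matDeg ((X i : MPoly d) • appellPhi d) = 3 ∧
      vecDeg ((appellPhi d).col i + (X i : MPoly d) • appellPsi α β) = 2 := by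
  have pearson_u := (pearson_appellFunctional hα hβ).mul_X i
  have pearson_dirac : Pearson (diracFunctional 0) ((X i : MPoly d) • appellPhi d)
      ((appellPhi d).col i + (X i : MPoly d) • appellPsi α β) :=
    pearson_diracFunctional (fun a b => by simp) (fun a => by simp [appellPhi_apply])
  exact ⟨pearson_u.add (pearson_dirac.smul lam), matDeg_X_smul_appellPhi i,
    vecDeg_appellPhi_col_add hα hβ i⟩

/-- **Appell-type polynomials are semiclassical with `s = 1`.**
The Appell-type functional `v = u + λ δ₀` satisfies, for each `i`, the matrix
Pearson equation `div((xᵢΦ) v) = (Φeᵢ + xᵢΨ)ᵗ v`, where `Φ`, `Ψ` are the Appell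
Pearson data; moreover `deg(xᵢΦ) = 3` and `deg(Φeᵢ + xᵢΨ) = 2`, so `v`
satisfies a Pearson-type equation with `s = max{3−2, 2−1} = 1`. -/
theorem appell_type_is_semiclassical
    {d : ℕ} (hd : 1 ≤ d)
    (α : Fin d → ℝ) (hα : ∀ i, -1 < α i) (β : ℝ) (hβ : -1 < β)
    (lam : ℝ) (hlam : 0 ≤ lam)
    (Φ : Matrix (Fin d) (Fin d) (MPoly d))
    (hΦ : Φ = Matrix.of fun i j => if i = j then
      MvPolynomial.X i * (MvPolynomial.X i - 1) else MvPolynomial.X i * MvPolynomial.X j)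
    (Ψ : Fin d → MPoly d)
    (hΨ : Ψ = fun i => MvPolynomial.C ((∑ k, α k) + β + d + 1) * MvPolynomial.X i -
      MvPolynomial.C (α i + 1)) :
    ∀ i : Fin d,
      (∀ (f : MPoly d) (a : Fin d),
        appellInt α β
            (∑ j, (MvPolynomial.X i * Φ a j) * pderiv j f +
              (Φ a i + MvPolynomial.X i * Ψ a) * f) +
          lam * MvPolynomial.eval (fun _ => (0 : ℝ))
            (∑ j, (MvPolynomial.X i * Φ a j) * pderiv j f +
              (Φ a i + MvPolynomial.X i * Ψ a) * f) = 0) ∧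
      matDeg (Matrix.of fun a b => MvPolynomial.X i * Φ a b) = 3 ∧
      vecDeg (fun a => Φ a i + MvPolynomial.X i * Ψ a) = 2 := by
  subst hΦ hΨ
  exact appell_type_is_semiclassical_general hα hβ lam
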